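/- arXiv:2509.10211 — 2 statements merged into one kernel-verified Lean document; each statement's English description precedes it below -/
import Mathlib

section
/- Let d ≥ 1 and let Ĉ : ℝ^d → ℝ^{d×d} be measurable with Ĉ(ξ) symmetric positive semidefinite for every ξ, ∫_{ℝ^d} ‖Ĉ(ξ)‖ dξ < ∞ and sup_{ξ} ‖Ĉ(ξ)‖ < ∞ (operator norm). Then for every ε > 0 and every γ > 0 there exists K = K(ε, γ, Ĉ) > 0 such that for every d-tuple g = (g₁,…,g_d) of finite signed Borel measures on ℝ^d, writing ĝ(ξ) := ∫_{ℝ^d} e^{−2πi⟨ξ,x⟩} dg(x) ∈ ℂ^d and ‖g‖_{TV} := Σ_j |g_j|(ℝ^d): ∫_{ℝ^d} Σ_{j,k} Ĉ_{jk}(ξ) ĝ_j(ξ) · conj(ĝ_k(ξ)) dξ ≤ ε ‖g‖²_{TV} + K ∫_{ℝ^d} (1+|ξ|²)^{−γ} |ĝ(ξ)|² dξ. -/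
/-!
Let `A` be an integrable majorant of the quadratic form and let `w > 0` be the weight. As
`K → ∞`, the excess `(A - K w)⁺` tends to `0` pointwise and is dominated by `A`, so its integral
is eventually at most `ε`. In the splitting `A |ĝ|² ≤ (A - K w)⁺ |ĝ|² + K w |ĝ|²` the first term
is then controlled by `|ĝ|² ≤ ‖g‖²_TV`, and the second is the weighted norm.
-/

open MeasureTheory
open scoped ENNReal RealInnerProductSpace

/-- The Fourier transform of a `d`-tuple of finite signed measures, computed componentwise via
the Jordan decomposition. -/
noncomputable def signedFourier {d : ℕ}
    (g : Fin d → MeasureTheory.SignedMeasure (EuclideanSpace ℝ (Fin d)))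
    (j : Fin d) (ξ : EuclideanSpace ℝ (Fin d)) : ℂ :=
  (∫ x, Complex.exp (-2 * Real.pi * Complex.I * ((⟪ξ, x⟫ : ℝ) : ℂ))
      ∂((g j).toJordanDecomposition.posPart)) -
    ∫ x, Complex.exp (-2 * Real.pi * Complex.I * ((⟪ξ, x⟫ : ℝ) : ℂ))
      ∂((g j).toJordanDecomposition.negPart)

open Filter Topology

lemma tendsto_lintegral_ofReal_sub_mul_atTop {α : Type*} [MeasurableSpace α] {μ : Measure α}
    {f w : α → ℝ} (hf : Integrable f μ) (hw : AEMeasurable w μ) (hw_pos : ∀ᵐ x ∂μ, 0 < w x) :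
    Tendsto (fun K : ℝ => ∫⁻ x, ENNReal.ofReal (f x - K * w x) ∂μ) atTop (𝓝 0) := by
  have h_meas (K : ℝ) : AEMeasurable (fun x => ENNReal.ofReal (f x - K * w x)) μ :=
    (hf.aemeasurable.sub (hw.const_mul K)).ennreal_ofReal
  have h_dom : ∀ᶠ K : ℝ in atTop, ∀ᵐ x ∂μ,
      ENNReal.ofReal (f x - K * w x) ≤ ENNReal.ofReal (f x) := by
    filter_upwards [eventually_ge_atTop 0] with K hK
    filter_upwards [hw_pos] with x hx
    exact ENNReal.ofReal_le_ofReal (sub_le_self _ (by positivity))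
  have h_lim : ∀ᵐ x ∂μ, Tendsto (fun K : ℝ => ENNReal.ofReal (f x - K * w x)) atTop (𝓝 0) := by
    filter_upwards [hw_pos] with x hx
    refine tendsto_const_nhds.congr' ?_
    filter_upwards [eventually_ge_atTop (f x / w x)] with K hK
    exact (ENNReal.ofReal_of_nonpos (sub_nonpos.2 ((div_le_iff₀ hx).1 hK))).symm
  simpa only [lintegral_zero] using tendsto_lintegral_filter_of_dominated_convergence' _
    (.of_forall h_meas) h_dom hf.lintegral_lt_top.ne h_lim

lemma lintegral_ofReal_mul_le_add {α : Type*} [MeasurableSpace α] {μ : Measure α}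
    {f w u : α → ℝ} (hf : AEMeasurable f μ) (hw : AEMeasurable w μ) {K T : ℝ} (hK : 0 ≤ K)
    (hu : ∀ᵐ x ∂μ, u x ∈ Set.Icc 0 T) :
    ∫⁻ x, ENNReal.ofReal (f x * u x) ∂μ ≤
      (∫⁻ x, ENNReal.ofReal (f x - K * w x) ∂μ) * ENNReal.ofReal T +
        ENNReal.ofReal K * ∫⁻ x, ENNReal.ofReal (w x * u x) ∂μ := by
  have h_meas : AEMeasurable (fun x => ENNReal.ofReal (f x - K * w x)) μ := by fun_prop
  rw [← lintegral_mul_const' _ _ ENNReal.ofReal_ne_top,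
    ← lintegral_const_mul' _ _ ENNReal.ofReal_ne_top, ← lintegral_add_left' (h_meas.mul_const _)]
  refine lintegral_mono_ae ?_
  filter_upwards [hu] with x ⟨hu_nonneg, hu_le⟩
  calc ENNReal.ofReal (f x * u x)
      = ENNReal.ofReal ((f x - K * w x) * u x + K * (w x * u x)) := by ring_nf
    _ ≤ ENNReal.ofReal ((f x - K * w x) * u x) + ENNReal.ofReal (K * (w x * u x)) :=
        ENNReal.ofReal_add_le
    _ ≤ ENNReal.ofReal (f x - K * w x) * ENNReal.ofReal T +
          ENNReal.ofReal K * ENNReal.ofReal (w x * u x) := by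
        rw [ENNReal.ofReal_mul' hu_nonneg, ENNReal.ofReal_mul hK]
        gcongr

lemma exists_lintegral_ofReal_mul_le_add {α : Type*} [MeasurableSpace α] {μ : Measure α}
    {f w : α → ℝ} (hf : Integrable f μ) (hw : AEMeasurable w μ) (hw_pos : ∀ᵐ x ∂μ, 0 < w x)
    {ε : ℝ} (hε : 0 < ε) :
    ∃ K : ℝ, 0 < K ∧ ∀ (u : α → ℝ) (T : ℝ), (∀ᵐ x ∂μ, u x ∈ Set.Icc 0 T) →
      ∫⁻ x, ENNReal.ofReal (f x * u x) ∂μ ≤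
        ENNReal.ofReal (ε * T) + ENNReal.ofReal K * ∫⁻ x, ENNReal.ofReal (w x * u x) ∂μ := by
  obtain ⟨K, hK_excess, hK⟩ := (((tendsto_lintegral_ofReal_sub_mul_atTop hf hw hw_pos).eventually
    (ge_mem_nhds (ENNReal.ofReal_pos.2 hε))).and (eventually_gt_atTop 0)).exists
  refine ⟨K, hK, fun u T hu => (lintegral_ofReal_mul_le_add hf.aemeasurable hw hK.le hu).trans ?_⟩
  rw [ENNReal.ofReal_mul hε.le]
  gcongr

lemma abs_sum_sum_mul_inner_le {ι F : Type*} [Fintype ι] [SeminormedAddCommGroup F]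
    [InnerProductSpace ℝ F] (a : ι → ι → ℝ) (z : ι → F) :
    |∑ j, ∑ k, a j k * ⟪z k, z j⟫| ≤ (∑ j, ∑ k, |a j k|) * ∑ i, ‖z i‖ ^ 2 := by
  have h_sq_le (i : ι) : ‖z i‖ ^ 2 ≤ ∑ i, ‖z i‖ ^ 2 :=
    Finset.single_le_sum (f := fun i => ‖z i‖ ^ 2) (fun _ _ => sq_nonneg _) (Finset.mem_univ i)
  have h_inner (j k : ι) : |⟪z j, z k⟫| ≤ ∑ i, ‖z i‖ ^ 2 :=
    (abs_real_inner_le_norm _ _).trans <| by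
      linarith [two_mul_le_add_sq ‖z j‖ ‖z k‖, h_sq_le j, h_sq_le k]
  calc |∑ j, ∑ k, a j k * ⟪z k, z j⟫|
      ≤ ∑ j, ∑ k, |a j k * ⟪z k, z j⟫| := (Finset.abs_sum_le_sum_abs _ _).trans <|
        Finset.sum_le_sum fun _ _ => Finset.abs_sum_le_sum_abs _ _
    _ ≤ ∑ j, ∑ k, |a j k| * ∑ i, ‖z i‖ ^ 2 := by
        simp only [abs_mul]
        gcongr
        exact h_inner _ _
    _ = (∑ j, ∑ k, |a j k|) * ∑ i, ‖z i‖ ^ 2 := by simp only [Finset.sum_mul]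

lemma norm_integral_posPart_sub_integral_negPart_le {α E : Type*} [MeasurableSpace α]
    [NormedAddCommGroup E] [NormedSpace ℝ E] (s : SignedMeasure α) {f : α → E} {C : ℝ}
    (hf : ∀ x, ‖f x‖ ≤ C) :
    ‖(∫ x, f x ∂s.toJordanDecomposition.posPart) - ∫ x, f x ∂s.toJordanDecomposition.negPart‖ ≤
      C * s.totalVariation.real Set.univ := by
  rw [SignedMeasure.totalVariation, measureReal_add_apply, mul_add]
  exact (norm_sub_le _ _).trans <| add_le_add
    (norm_integral_le_of_norm_le_const (.of_forall hf))
    (norm_integral_le_of_norm_le_const (.of_forall hf))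

section signedFourier

variable {d : ℕ} (g : Fin d → SignedMeasure (EuclideanSpace ℝ (Fin d)))

lemma norm_signedFourier_le (j : Fin d) (ξ : EuclideanSpace ℝ (Fin d)) :
    ‖signedFourier g j ξ‖ ≤ (g j).totalVariation.real Set.univ := by
  have h_exp (x : EuclideanSpace ℝ (Fin d)) :
      ‖Complex.exp (-2 * Real.pi * Complex.I * ((⟪ξ, x⟫ : ℝ) : ℂ))‖ ≤ 1 := by
    simp [Complex.norm_exp]
  exact (norm_integral_posPart_sub_integral_negPart_le (g j) h_exp).trans_eq (one_mul _)

lemma sum_norm_signedFourier_sq_le (ξ : EuclideanSpace ℝ (Fin d)) :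
    ∑ j, ‖signedFourier g j ξ‖ ^ 2 ≤ (∑ j, (g j).totalVariation.real Set.univ) ^ 2 :=
  calc ∑ j, ‖signedFourier g j ξ‖ ^ 2
      ≤ ∑ j, (g j).totalVariation.real Set.univ ^ 2 := by
        gcongr with j
        exact norm_signedFourier_le g j ξ
    _ ≤ (∑ j, (g j).totalVariation.real Set.univ) ^ 2 :=
        Finset.sum_sq_le_sq_sum_of_nonneg fun _ _ => measureReal_nonneg

end signedFourier

theorem spectral_density_interpolation_general {d : ℕ}
    {μ : Measure (EuclideanSpace ℝ (Fin d))}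
    {Chat : EuclideanSpace ℝ (Fin d) → Matrix (Fin d) (Fin d) ℝ}
    (hint : ∀ i j, Integrable (fun ξ => Chat ξ i j) μ)
    {w : EuclideanSpace ℝ (Fin d) → ℝ} (hw : AEMeasurable w μ) (hw_pos : ∀ᵐ ξ ∂μ, 0 < w ξ)
    {ε : ℝ} (hε : 0 < ε) :
    ∃ K : ℝ, 0 < K ∧ ∀ g : Fin d → SignedMeasure (EuclideanSpace ℝ (Fin d)),
      ∫⁻ ξ, ‖∑ j, ∑ k, Chat ξ j k *
          (signedFourier g j ξ * (starRingEnd ℂ) (signedFourier g k ξ)).re‖ₑ ∂μ ≤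
        ENNReal.ofReal (ε * (∑ j, (g j).totalVariation.real Set.univ) ^ 2) +
          ENNReal.ofReal K *
            ∫⁻ ξ, ENNReal.ofReal (w ξ * ∑ j, ‖signedFourier g j ξ‖ ^ 2) ∂μ := by
  have h_majorant : Integrable (fun ξ => ∑ j, ∑ k, |Chat ξ j k|) μ :=
    integrable_finsetSum _ fun j _ => integrable_finsetSum _ fun k _ => (hint j k).abs
  obtain ⟨K, hK, h_interp⟩ := exists_lintegral_ofReal_mul_le_add h_majorant hw hw_pos hε
  refine ⟨K, hK, fun g => le_trans (lintegral_mono fun ξ => ?_) <|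
    h_interp (fun ξ => ∑ j, ‖signedFourier g j ξ‖ ^ 2) _
      (.of_forall fun ξ => ⟨by positivity, sum_norm_signedFourier_sq_le g ξ⟩)⟩
  simp only [Real.enorm_eq_ofReal_abs, ← Complex.inner]
  exact ENNReal.ofReal_le_ofReal (abs_sum_sum_mul_inner_le (Chat ξ) fun j => signedFourier g j ξ)

/-- Interpolation inequality for a matrix-valued spectral density `Ĉ` that is pointwise
symmetric positive semidefinite, integrable and bounded: for every `ε > 0` and `γ > 0` there
is `K > 0` such that for every tuple `g` of finite signed measures,
`∫ Σ_{j,k} Ĉ_{jk}(ξ) ĝ_j(ξ) conj(ĝ_k(ξ)) dξ ≤ ε ‖g‖²_{TV} + K ∫ (1+|ξ|²)^{−γ} |ĝ(ξ)|² dξ`. -/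
theorem spectral_density_interpolation (d : ℕ) (hd : 1 ≤ d)
    (Chat : EuclideanSpace ℝ (Fin d) → Matrix (Fin d) (Fin d) ℝ)
    (hmeas : ∀ i j, Measurable fun ξ => Chat ξ i j)
    (hpsd : ∀ ξ, (Chat ξ).PosSemidef)
    (hint : ∀ i j, Integrable (fun ξ => Chat ξ i j) volume)
    (hbdd : ∃ Kb : ℝ, ∀ ξ i j, |Chat ξ i j| ≤ Kb)
    (ε γ : ℝ) (hε : 0 < ε) (hγ : 0 < γ) :
    ∃ K : ℝ, 0 < K ∧
      ∀ g : Fin d → MeasureTheory.SignedMeasure (EuclideanSpace ℝ (Fin d)),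
        (∫⁻ ξ, ENNReal.ofReal
            (∑ j, ∑ k, Chat ξ j k *
              (signedFourier g j ξ * (starRingEnd ℂ) (signedFourier g k ξ)).re)) ≤
          ENNReal.ofReal
              (ε * (∑ j, ((g j).totalVariation Set.univ).toReal) ^ 2) +
            ENNReal.ofReal K *
              ∫⁻ ξ, ENNReal.ofReal
                ((1 + ‖ξ‖^2) ^ (-γ) * ∑ j, ‖signedFourier g j ξ‖ ^ 2) := by
  obtain ⟨K, hK, h_interp⟩ := spectral_density_interpolation_general hint
    (w := fun ξ => (1 + ‖ξ‖ ^ 2) ^ (-γ)) (by fun_prop) (.of_forall fun ξ => by positivity) hε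
  exact ⟨K, hK, fun g => (lintegral_mono fun _ => Real.ofReal_le_enorm _).trans (h_interp g)⟩
end

section
/- For α ∈ (0,1) with α ≠ 1/2, define K₂(α) := (1−α) · cos(απ) · Γ(1−2α) · Γ(α+1/2) / Γ(α+1), where Γ denotes the real Gamma function. Then lim_{α→0⁺} K₂(α) = √π and lim_{α→1⁻} K₂(α) = √π / 4. -/
open Filter Real

/-! Euler's reflection formula at `α + 1/2` and Legendre's duplication formula at `1/2 - α` have
the factor `Γ(1/2 - α)` in common. Eliminating it gives
`cos(απ) Γ(1 - 2α) Γ(α + 1/2) = √π Γ(1 - α) / 4^α`, and `(1 - α) Γ(1 - α) = Γ(2 - α)` then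
removes the remaining pole at `α = 1`:
`K₂(α) = √π Γ(2 - α) / (4^α Γ(α + 1))`, which is continuous on `(-1, 2)`. -/

section KraichnanConstant

open scoped Topology

variable {α : ℝ}

lemma continuousAt_Gamma_comp {X : Type*} [TopologicalSpace X] {f : X → ℝ} {x : X}
    (hf : ContinuousAt f x) (hpos : 0 < f x) : ContinuousAt (fun y => Gamma (f y)) x :=
  (differentiableOn_Gamma_Ioi.continuousOn.continuousAt (Ioi_mem_nhds hpos)).comp hf

lemma eventually_cos_mul_pi_ne_zero (α : ℝ) : ∀ᶠ β in 𝓝[≠] α, cos (β * π) ≠ 0 := by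
  by_cases hcos : cos (α * π) = 0
  · have hsin : sin (α * π) ≠ 0 := fun hsin => by simpa [hcos, hsin] using sin_sq_add_cos_sq (α * π)
    exact ((hasDerivAt_mul_const π).cos).eventually_ne
      (mul_ne_zero (neg_ne_zero.mpr hsin) pi_ne_zero)
  · have hcont : ContinuousAt (fun β => cos (β * π)) α := by fun_prop
    exact (hcont.eventually_ne hcos).filter_mono nhdsWithin_le_nhds

lemma cos_mul_Gamma_add_half_mul_Gamma_half_sub (hα : cos (α * π) ≠ 0) :
    cos (α * π) * (Gamma (α + 1 / 2) * Gamma (1 / 2 - α)) = π := by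
  have reflection := Gamma_mul_Gamma_one_sub (α + 1 / 2)
  rw [show 1 - (α + 1 / 2) = 1 / 2 - α by ring, show π * (α + 1 / 2) = α * π + π / 2 by ring,
    sin_add_pi_div_two] at reflection
  rw [reflection, mul_div_cancel₀ π hα]

lemma Gamma_half_sub_mul_Gamma_one_sub (α : ℝ) :
    Gamma (1 / 2 - α) * Gamma (1 - α) = Gamma (1 - 2 * α) * 4 ^ α * √π := by
  have duplication := Gamma_mul_Gamma_add_half (1 / 2 - α)
  rwa [show 1 / 2 - α + 1 / 2 = 1 - α by ring, show 2 * (1 / 2 - α) = 1 - 2 * α by ring,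
    sub_sub_cancel, rpow_mul zero_le_two, show (2 : ℝ) ^ (2 : ℝ) = 4 by norm_num] at duplication

lemma cos_mul_Gamma_one_sub_two_mul_mul_Gamma_add_half (hα : cos (α * π) ≠ 0) :
    cos (α * π) * Gamma (1 - 2 * α) * Gamma (α + 1 / 2) = √π * Gamma (1 - α) / 4 ^ α := by
  have hpow : (4 : ℝ) ^ α ≠ 0 := by positivity
  have hsqrt : √π ≠ 0 := by positivity
  rw [eq_div_iff hpow]
  apply mul_right_cancel₀ hsqrt
  calc cos (α * π) * Gamma (1 - 2 * α) * Gamma (α + 1 / 2) * 4 ^ α * √π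
      = cos (α * π) * Gamma (α + 1 / 2) * (Gamma (1 - 2 * α) * 4 ^ α * √π) := by ring
    _ = cos (α * π) * (Gamma (α + 1 / 2) * Gamma (1 / 2 - α)) * Gamma (1 - α) := by
        rw [← Gamma_half_sub_mul_Gamma_one_sub]; ring
    _ = √π * √π * Gamma (1 - α) := by
        rw [cos_mul_Gamma_add_half_mul_Gamma_half_sub hα, mul_self_sqrt pi_nonneg]
    _ = √π * Gamma (1 - α) * √π := by ring

/-- The constant `K₂(α)` of the Duchon–Robert-type formula. At the poles `α = 1/2` and `α = 1` of
`Γ(1 - 2α)` Mathlib's convention `Γ = 0` makes its value `0`, which is not its limit there. -/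
noncomputable def kraichnanConstant (α : ℝ) : ℝ :=
  (1 - α) * cos (α * π) * Gamma (1 - 2 * α) * Gamma (α + 1 / 2) / Gamma (α + 1)

lemma kraichnanConstant_eq (hcos : cos (α * π) ≠ 0) (hone : α ≠ 1) :
    kraichnanConstant α = √π * Gamma (2 - α) / (4 ^ α * Gamma (α + 1)) := by
  have hGamma : Gamma (2 - α) = (1 - α) * Gamma (1 - α) := by
    rw [← Gamma_add_one (sub_ne_zero.mpr hone.symm)]; ring_nf
  calc kraichnanConstant α
      = (1 - α) * (cos (α * π) * Gamma (1 - 2 * α) * Gamma (α + 1 / 2)) / Gamma (α + 1) := by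
        rw [kraichnanConstant]; ring
    _ = √π * Gamma (2 - α) / (4 ^ α * Gamma (α + 1)) := by
        rw [cos_mul_Gamma_one_sub_two_mul_mul_Gamma_add_half hcos, hGamma]; ring

lemma tendsto_kraichnanConstant (hα : α ∈ Set.Ioo (-1) 2) :
    Tendsto kraichnanConstant (𝓝[≠] α) (𝓝 (√π * Gamma (2 - α) / (4 ^ α * Gamma (α + 1)))) := by
  have hpos : 0 < α + 1 := by linarith [hα.1]
  have hnum : ContinuousAt (fun β => Gamma (2 - β)) α :=
    continuousAt_Gamma_comp (by fun_prop) (sub_pos.mpr hα.2)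
  have hden : ContinuousAt (fun β => Gamma (β + 1)) α :=
    continuousAt_Gamma_comp (by fun_prop) hpos
  have hpow : ContinuousAt (fun β : ℝ => (4 : ℝ) ^ β) α := continuousAt_const_rpow four_ne_zero
  have hden_ne : 4 ^ α * Gamma (α + 1) ≠ 0 := by have := Gamma_pos_of_pos hpos; positivity
  have hlim := ((hnum.const_mul √π).div (hpow.mul hden) hden_ne).tendsto
  have hne_one : ∀ᶠ β in 𝓝[≠] α, β ≠ 1 := (hasDerivAt_id α).eventually_ne one_ne_zero
  refine (hlim.mono_left nhdsWithin_le_nhds).congr' ?_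
  filter_upwards [eventually_cos_mul_pi_ne_zero α, hne_one] with β hcos hone
  exact (kraichnanConstant_eq hcos hone).symm

end KraichnanConstant

/-- Endpoint limits of the constant `K₂(α) = (1−α) cos(απ) Γ(1−2α) Γ(α+1/2)/Γ(α+1)` from the
Duchon–Robert-type formula of the incompressible Kraichnan model:
`K₂(α) → √π` as `α → 0⁺` and `K₂(α) → √π/4` as `α → 1⁻`. -/
theorem kraichnan_constant_limits :
    Tendsto (fun α : ℝ =>
        (1 - α) * Real.cos (α * Real.pi) * Real.Gamma (1 - 2*α) * Real.Gamma (α + 1/2) /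
          Real.Gamma (α + 1))
      (nhdsWithin 0 (Set.Ioi 0)) (nhds (Real.sqrt Real.pi)) ∧
    Tendsto (fun α : ℝ =>
        (1 - α) * Real.cos (α * Real.pi) * Real.Gamma (1 - 2*α) * Real.Gamma (α + 1/2) /
          Real.Gamma (α + 1))
      (nhdsWithin 1 (Set.Iio 1)) (nhds (Real.sqrt Real.pi / 4)) := by
  have value_zero : √π * Gamma (2 - 0) / (4 ^ (0 : ℝ) * Gamma (0 + 1)) = √π := by simp
  have value_one : √π * Gamma (2 - 1) / (4 ^ (1 : ℝ) * Gamma (1 + 1)) = √π / 4 := by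
    norm_num [one_add_one_eq_two]
  have limit_zero := tendsto_kraichnanConstant (α := 0) (by norm_num)
  have limit_one := tendsto_kraichnanConstant (α := 1) (by norm_num)
  rw [value_zero] at limit_zero
  rw [value_one] at limit_one
  exact ⟨limit_zero.mono_left (nhdsGT_le_nhdsNE 0),
    limit_one.mono_left (nhdsLT_le_nhdsNE 1)⟩
end
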